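/- The six-parameter centrally extended algebra closes: For any complex numbers c⁺, c⁻, d⁺, d⁻, d₀, k, the alternating bilinear bracket defined on the free ℂ-vector space with basis {Lσ_m : σ ∈ {+,−}, m ∈ ℤ} ∪ {Pσ_m : σ ∈ {+,−}, m ∈ ℤ} ∪ {Q, C} by: i[Lσ_m, Lσ_n] = (m−n)Lσ_{m+n} + (cσ/12)m³δ_{m+n,0}·C; [L⁺_m, L⁻_n] = 0; i[Lσ_m, Pσ_n] = −n·Pσ_{m+n} + (dσ·m² − σ·i·d₀·m(m+2))δ_{m+n,0}·C; [Lσ_m, P^{−σ}_n] = 0; i[Pσ_m, Pσ_n] = k·m·δ_{m+n,0}·C; [P⁺_m, P⁻_n] = 0; i[Lσ_m, Q] = (i/2)Pσ_m + σ·d₀·δ_{m,0}·C; i[Pσ_m, Q] = (i/2)·k·δ_{m,0}·C; and [x, C] = 0 for all basis elements x, satisfies the Jacobi identity, i.e. defines a Lie algebra structure over ℂ. -/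

import Mathlib

/-- Basis elements of the centrally extended asymptotic symmetry algebra:
`L σ m`, `P σ m` (with chirality `σ`, `true = +`, `false = -`), `Q` and the
central element `C`. -/
inductive BasisElem
  | L (σ : Bool) (m : ℤ)
  | P (σ : Bool) (m : ℤ)
  | Q
  | C

/-- The canonical basis vector of the free ℂ-vector space on `BasisElem`. -/
noncomputable def e (b : BasisElem) : BasisElem →₀ ℂ := Finsupp.single b 1

/-- The sign of a chirality: `true` is `+1`, `false` is `-1`. -/
noncomputable def sgn (σ : Bool) : ℂ := if σ then 1 else -1

open BasisElem in
/-- The rescaled bracket `i [a, b]` on basis elements. -/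
noncomputable def br (c d : Bool → ℂ) (d0 k : ℂ) : BasisElem → BasisElem → (BasisElem →₀ ℂ)
  | L σ m, L τ n => if σ = τ then ((m : ℂ) - n) • e (.L σ (m + n))
          + (c σ / 12 * (m : ℂ) ^ 3 * (if m + n = 0 then 1 else 0)) • e .C else 0
  | L σ m, P τ n => if σ = τ then (-(n : ℂ)) • e (.P σ (m + n))
          + ((d σ * (m : ℂ) ^ 2 - sgn σ * Complex.I * d0 * m * (m + 2))
              * (if m + n = 0 then 1 else 0)) • e .C else 0
  | P τ n, L σ m => if σ = τ then (n : ℂ) • e (.P σ (m + n))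
          - ((d σ * (m : ℂ) ^ 2 - sgn σ * Complex.I * d0 * m * (m + 2))
              * (if m + n = 0 then 1 else 0)) • e .C else 0
  | P σ m, P τ n => if σ = τ then (k * (m : ℂ) * (if m + n = 0 then 1 else 0)) • e .C else 0
  | L σ m, Q => (Complex.I / 2) • e (.P σ m) + (sgn σ * d0 * (if m = 0 then 1 else 0)) • e .C
  | Q, L σ m => -((Complex.I / 2) • e (.P σ m) + (sgn σ * d0 * (if m = 0 then 1 else 0)) • e .C)
  | P _ m, Q => (Complex.I / 2 * k * (if m = 0 then 1 else 0)) • e .C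
  | Q, P _ m => -((Complex.I / 2 * k * (if m = 0 then 1 else 0)) • e .C)
  | Q, Q => 0
  | C, _ => 0
  | _, C => 0

/-- Bilinear extension of `br`. -/
noncomputable def BR (c d : Bool → ℂ) (d0 k : ℂ) :
    (BasisElem →₀ ℂ) →ₗ[ℂ] (BasisElem →₀ ℂ) →ₗ[ℂ] (BasisElem →₀ ℂ) :=
  Finsupp.linearCombination ℂ (fun a => Finsupp.linearCombination ℂ (br c d d0 k a))

lemma BR_e (c d : Bool → ℂ) (d0 k : ℂ) (a b : BasisElem) :
    BR c d d0 k (e a) (e b) = br c d d0 k a b := by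
  simp [BR, e]

lemma br_skew (c d : Bool → ℂ) (d0 k : ℂ) (a b : BasisElem) :
    br c d d0 k a b = - br c d d0 k b a := by
  rcases a with ⟨σ, m⟩ | ⟨σ, m⟩ | _ | _ <;> rcases b with ⟨τ, n⟩ | ⟨τ, n⟩ | _ | _ <;>
    simp only [br, neg_neg, neg_zero]
  · by_cases h : σ = τ
    · subst h
      simp only [if_true, add_comm n m]
      by_cases h0 : m + n = 0
      · obtain rfl : n = -m := by omega
        simp only [h0, if_true]
        match_scalars <;> push_cast <;> ring
      · simp only [h0, if_false]
        match_scalars <;> ring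
    · simp [h, Ne.symm h]
  · split_ifs <;> first | module | simp
  · split_ifs <;> first | module | simp
  · by_cases h : σ = τ
    · subst h
      simp only [if_true, add_comm n m]
      by_cases h0 : m + n = 0
      · obtain rfl : n = -m := by omega
        simp only [h0, if_true]
        match_scalars <;> push_cast <;> ring
      · simp only [h0, if_false]
        match_scalars <;> ring
    · simp [h, Ne.symm h]

lemma ind (p : (BasisElem →₀ ℂ) → Prop) (h0 : p 0) (ha : ∀ x y, p x → p y → p (x + y))
    (hs : ∀ (r : ℂ) x, p x → p (r • x)) (he : ∀ b, p (e b)) (x) : p x := by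
  induction x using Finsupp.induction_linear with
  | zero => exact h0
  | add f g hf hg => exact ha _ _ hf hg
  | single a b =>
    have : Finsupp.single a b = b • e a := by simp [e]
    rw [this]; exact hs _ _ (he _)

lemma BR_skew (c d : Bool → ℂ) (d0 k : ℂ) (x y : BasisElem →₀ ℂ) :
    BR c d d0 k x y = - BR c d d0 k y x := by
  induction x using ind with
  | h0 => simp
  | ha a b iha ihb => simp only [map_add, LinearMap.add_apply, iha, ihb]; abel
  | hs r a iha => simp only [map_smul, LinearMap.smul_apply, iha, smul_neg]
  | he a =>
    induction y using ind with
    | h0 => simp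
    | ha a b iha ihb => simp only [map_add, LinearMap.add_apply, iha, ihb]; abel
    | hs r a iha => simp only [map_smul, LinearMap.smul_apply, iha, smul_neg]
    | he b => rw [BR_e, BR_e]; exact br_skew ..

set_option maxHeartbeats 4000000 in
lemma jac_e (c d : Bool → ℂ) (d0 k : ℂ) (x y z : BasisElem) :
    BR c d d0 k (br c d d0 k x y) (e z) + BR c d d0 k (br c d d0 k y z) (e x)
      + BR c d d0 k (br c d d0 k z x) (e y) = 0 := by
  have hI : Complex.I * Complex.I = -1 := Complex.I_mul_I
  rcases x with ⟨σ, m⟩ | ⟨σ, m⟩ | _ | _ <;> rcases y with ⟨τ, n⟩ | ⟨τ, n⟩ | _ | _ <;>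
    rcases z with ⟨υ, p⟩ | ⟨υ, p⟩ | _ | _ <;>
    (try cases σ) <;> (try cases τ) <;> (try cases υ) <;>
    simp only [br, if_true, if_false, reduceCtorEq, map_add, map_sub, map_neg, map_zero, map_smul,
      LinearMap.add_apply, LinearMap.sub_apply, LinearMap.neg_apply, LinearMap.zero_apply,
      LinearMap.smul_apply, BR_e, smul_zero, add_zero, zero_add, neg_zero, sub_zero,
      add_assoc, add_comm, add_left_comm] <;>
    first
    | done
    | (by_cases h : m + (n + p) = 0
       · obtain rfl : p = -m - n := by omega
         simp only [h, if_true, if_false]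
         match_scalars <;> push_cast <;> ring1
       · simp only [h, if_true, if_false]
         match_scalars <;> push_cast <;> ring_nf)
    | (by_cases h : m + n = 0
       · obtain rfl : n = -m := by omega
         simp only [h, if_true, if_false]
         match_scalars <;> push_cast <;> ring_nf <;> simp [Complex.I_sq] <;> ring_nf
       · simp only [h, if_true, if_false]
         match_scalars <;> push_cast <;> ring_nf)
    | (by_cases h : m + p = 0
       · obtain rfl : p = -m := by omega
         simp only [h, if_true, if_false]
         match_scalars <;> push_cast <;> ring_nf <;> simp [Complex.I_sq] <;> ring_nf
       · simp only [h, if_true, if_false]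
         match_scalars <;> push_cast <;> ring_nf)
    | (by_cases h : n + p = 0
       · obtain rfl : p = -n := by omega
         simp only [h, if_true, if_false]
         match_scalars <;> push_cast <;> ring_nf <;> simp [Complex.I_sq] <;> ring_nf
       · simp only [h, if_true, if_false]
         match_scalars <;> push_cast <;> ring_nf)
    | module

lemma jac (c d : Bool → ℂ) (d0 k : ℂ) (x y z : BasisElem →₀ ℂ) :
    BR c d d0 k (BR c d d0 k x y) z + BR c d d0 k (BR c d d0 k y z) x
      + BR c d d0 k (BR c d d0 k z x) y = 0 := by
  induction x using ind with
  | h0 => simp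
  | ha a b iha ihb =>
    simp only [map_add, LinearMap.add_apply]
    have hab := congrArg₂ (· + ·) iha ihb
    simp only [add_zero] at hab
    rw [← hab]; abel
  | hs r a iha =>
    simp only [map_smul, LinearMap.smul_apply, ← smul_add, iha, smul_zero]
  | he a =>
  induction y using ind with
  | h0 => simp
  | ha a b iha ihb =>
    simp only [map_add, LinearMap.add_apply]
    have hab := congrArg₂ (· + ·) iha ihb
    simp only [add_zero] at hab
    rw [← hab]; abel
  | hs r a iha =>
    simp only [map_smul, LinearMap.smul_apply, ← smul_add, iha, smul_zero]
  | he b =>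
  induction z using ind with
  | h0 => simp
  | ha a b iha ihb =>
    simp only [map_add, LinearMap.add_apply]
    have hab := congrArg₂ (· + ·) iha ihb
    simp only [add_zero] at hab
    rw [← hab]; abel
  | hs r a iha =>
    simp only [map_smul, LinearMap.smul_apply, ← smul_add, iha, smul_zero]
  | he c' => simp only [BR_e]; exact jac_e ..

/-- The six-parameter centrally extended algebra closes: for any complex numbers
`c⁺, c⁻, d⁺, d⁻, d₀, k` there is a bilinear bracket `B` on the free ℂ-vector space
on `BasisElem` taking the prescribed values on basis vectors, which is alternating
and satisfies the Jacobi identity, i.e. it defines a Lie algebra structure. -/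
theorem stmt_2 (c d : Bool → ℂ) (d0 k : ℂ) :
    ∃ B : (BasisElem →₀ ℂ) →ₗ[ℂ] (BasisElem →₀ ℂ) →ₗ[ℂ] (BasisElem →₀ ℂ),
      (∀ σ (m n : ℤ), Complex.I • B (e (.L σ m)) (e (.L σ n)) =
        ((m : ℂ) - n) • e (.L σ (m + n))
          + (c σ / 12 * (m : ℂ) ^ 3 * (if m + n = 0 then 1 else 0)) • e .C) ∧
      (∀ m n : ℤ, B (e (.L true m)) (e (.L false n)) = 0) ∧
      (∀ σ (m n : ℤ), Complex.I • B (e (.L σ m)) (e (.P σ n)) =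
        (-(n : ℂ)) • e (.P σ (m + n))
          + ((d σ * (m : ℂ) ^ 2 - sgn σ * Complex.I * d0 * m * (m + 2))
              * (if m + n = 0 then 1 else 0)) • e .C) ∧
      (∀ σ (m n : ℤ), B (e (.L σ m)) (e (.P (!σ) n)) = 0) ∧
      (∀ σ (m n : ℤ), Complex.I • B (e (.P σ m)) (e (.P σ n)) =
        (k * (m : ℂ) * (if m + n = 0 then 1 else 0)) • e .C) ∧
      (∀ m n : ℤ, B (e (.P true m)) (e (.P false n)) = 0) ∧
      (∀ σ (m : ℤ), Complex.I • B (e (.L σ m)) (e .Q) =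
        (Complex.I / 2) • e (.P σ m) + (sgn σ * d0 * (if m = 0 then 1 else 0)) • e .C) ∧
      (∀ σ (m : ℤ), Complex.I • B (e (.P σ m)) (e .Q) =
        (Complex.I / 2 * k * (if m = 0 then 1 else 0)) • e .C) ∧
      (∀ b : BasisElem, B (e b) (e .C) = 0) ∧
      (∀ x, B x x = 0) ∧
      (∀ x y z, B (B x y) z + B (B y z) x + B (B z x) y = 0) := by
  have hI : Complex.I * -Complex.I = 1 := by simp
  refine ⟨(-Complex.I) • BR c d d0 k, ?_, ?_, ?_, ?_, ?_, ?_, ?_, ?_, ?_, ?_, ?_⟩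
  all_goals simp only [LinearMap.smul_apply, BR_e, smul_smul, hI, one_smul]
  · intros; simp [br]
  · intros; simp [br]
  · intros; simp [br]
  · intros; simp [br]
  · intros; simp [br]
  · intros; simp [br]
  · intros; simp [br]
  · intros; simp [br]
  · rintro (_ | _ | _ | _) <;> simp [br]
  · intro x
    rw [self_eq_neg.mp (BR_skew c d d0 k x x), smul_zero]
  · intro x y z
    simp only [map_smul, LinearMap.smul_apply, ← smul_add, jac, smul_zero]
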